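/- Let E be a real Hilbert space, f : E → ℝ differentiable with L-Lipschitz gradient ∇f (L ≥ 0), η ≥ 0, σ ≥ 0, and R ≥ 1 a natural number. Let (Ω, μ) be a probability space and G : E × Ω → E a measurable stochastic-gradient oracle such that for every θ ∈ E, ω ↦ G(θ, ω) is Bochner-integrable with ∫ G(θ, ω) dμ(ω) = ∇f(θ) and ∫ ‖G(θ, ω) − ∇f(θ)‖² dμ(ω) ≤ σ². On the product probability space (Ω^R, μ^⊗R) define iterates Θ_0(ω) = θ₀ and Θ_{r+1}(ω) = Θ_r(ω) − η·G(Θ_r(ω), ω_r) for r = 0,…,R−1, and assume all functions ω ↦ f(Θ_r(ω)), ω ↦ ‖∇f(Θ_r(ω))‖², ω ↦ ‖G(Θ_r(ω), ω_r)‖² are integrable with respect to μ^⊗R. Then ∫ f(Θ_R) dμ^⊗R ≤ f(θ₀) − (η − L·η²/2)·∑_{r=0}^{R−1} ∫ ‖∇f(Θ_r)‖² dμ^⊗R + R·L·η²·σ²/2. -/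

import Mathlib

open MeasureTheory

theorem sgd_aux_descent
    {E : Type*} [NormedAddCommGroup E] [InnerProductSpace ℝ E] [CompleteSpace E]
    (f : E → ℝ) (f' : E → E) (L : ℝ)
    (hdiff : ∀ x : E, HasGradientAt f (f' x) x)
    (hlip : ∀ x y : E, ‖f' x - f' y‖ ≤ L * ‖x - y‖) (x v : E) :
    f (x + v) ≤ f x + inner ℝ (f' x) v + L / 2 * ‖v‖ ^ 2 := by
  have hd : ∀ t : ℝ, HasDerivAt
      (fun t : ℝ => f (x + t • v) - t * inner ℝ (f' x) v - L / 2 * ‖v‖ ^ 2 * t ^ 2)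
      (inner ℝ (f' (x + t • v)) v - inner ℝ (f' x) v - L * ‖v‖ ^ 2 * t) t := by
    intro t
    have h1 : HasDerivAt (fun t : ℝ => x + t • v) v t := by
      simpa using ((hasDerivAt_id t).smul_const v).const_add x
    have h2 := (hdiff (x + t • v)).hasFDerivAt.comp_hasDerivAt t h1
    have h3 := (hasDerivAt_id t).mul_const (inner ℝ (f' x) v)
    have h4 := (hasDerivAt_pow 2 t).const_mul (L / 2 * ‖v‖ ^ 2)
    refine ((h2.sub h3).sub h4).congr_deriv ?_
    simp
    ring
  have hanti : AntitoneOn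
      (fun t : ℝ => f (x + t • v) - t * inner ℝ (f' x) v - L / 2 * ‖v‖ ^ 2 * t ^ 2)
      (Set.Ici 0) := by
    apply antitoneOn_of_deriv_nonpos (convex_Ici 0)
    · exact fun t _ => (hd t).continuousAt.continuousWithinAt
    · exact fun t _ => (hd t).differentiableAt.differentiableWithinAt
    · intro t ht
      rw [interior_Ici] at ht
      have ht : 0 < t := ht
      rw [(hd t).deriv, ← inner_sub_left]
      have h1 := real_inner_le_norm (f' (x + t • v) - f' x) v
      have h2 := hlip (x + t • v) x
      rw [add_sub_cancel_left, norm_smul, Real.norm_of_nonneg ht.le] at h2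
      nlinarith [mul_le_mul_of_nonneg_right h2 (norm_nonneg v)]
  have := hanti (Set.mem_Ici.2 le_rfl) (Set.mem_Ici.2 zero_le_one) zero_le_one
  simp at this
  linarith

theorem sgd_aux_update {Ω : Type*} [MeasurableSpace Ω] (μ : Measure Ω) [IsProbabilityMeasure μ]
    {R : ℕ} (r : Fin R) :
    MeasurePreserving (fun p : (Fin R → Ω) × Ω => Function.update p.1 r p.2)
      ((Measure.pi fun _ : Fin R => μ).prod μ) (Measure.pi fun _ : Fin R => μ) := by
  have hm : Measurable (fun p : (Fin R → Ω) × Ω => Function.update p.1 r p.2) := by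
    rw [measurable_pi_iff]
    intro i
    by_cases h : i = r
    · subst h
      simpa using measurable_snd
    · simp only [Function.update_of_ne h]
      exact (measurable_pi_apply i).comp measurable_fst
  refine ⟨hm, (Measure.pi_eq ?_).symm⟩
  intro s hs
  rw [Measure.map_apply hm (MeasurableSet.univ_pi hs)]
  have : (fun p : (Fin R → Ω) × Ω => Function.update p.1 r p.2) ⁻¹' (Set.univ.pi s)
      = (Set.univ.pi (Function.update s r Set.univ)) ×ˢ (s r) := by
    ext ⟨ω, x⟩
    simp only [Set.mem_preimage, Set.mem_pi, Set.mem_univ, true_implies, Set.mem_prod]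
    constructor
    · intro h
      refine ⟨fun i => ?_, by simpa using h r⟩
      by_cases hi : i = r
      · subst hi; simp
      · simpa [hi] using h i
    · rintro ⟨h, h'⟩ i
      by_cases hi : i = r
      · subst hi; simpa using h'
      · simpa [hi] using h i
  rw [this, Measure.prod_prod, Measure.pi_pi,
    ← Finset.mul_prod_erase Finset.univ (fun i => μ (s i)) (Finset.mem_univ r),
    ← Finset.mul_prod_erase Finset.univ _ (Finset.mem_univ r)]
  rw [Finset.prod_congr rfl (g := fun i => μ (s i))]
  · simp [mul_comm]
  · intro i hi
    rw [Function.update_of_ne (Finset.ne_of_mem_erase hi)]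

theorem sgd_aux_point
    {E : Type*} [NormedAddCommGroup E] [InnerProductSpace ℝ E] [CompleteSpace E]
    {Ω : Type*} [MeasurableSpace Ω] (μ : Measure Ω) [IsProbabilityMeasure μ]
    (f : E → ℝ) (f' : E → E) (L : ℝ) (hL : 0 ≤ L)
    (hdiff : ∀ x : E, HasGradientAt f (f' x) x)
    (hlip : ∀ x y : E, ‖f' x - f' y‖ ≤ L * ‖x - y‖)
    (η σ : ℝ) (θ : E) (g : Ω → E) (hg : Integrable g μ) (hmean : ∫ ω, g ω ∂μ = f' θ)
    (hvar : ∫ ω, ‖g ω - f' θ‖ ^ 2 ∂μ ≤ σ ^ 2)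
    (hg2 : Integrable (fun ω => ‖g ω‖ ^ 2) μ)
    (hF : Integrable (fun ω => f (θ - η • g ω)) μ) :
    ∫ ω, f (θ - η • g ω) ∂μ ≤
      f θ - (η - L * η ^ 2 / 2) * ‖f' θ‖ ^ 2 + L * η ^ 2 * σ ^ 2 / 2 := by
  have hin : Integrable (fun ω => inner ℝ (f' θ) (g ω)) μ := hg.const_inner (f' θ)
  have hini : ∫ ω, inner ℝ (f' θ) (g ω) ∂μ = ‖f' θ‖ ^ 2 := by
    rw [integral_inner hg, hmean, real_inner_self_eq_norm_sq]
  have hv : ∫ ω, ‖g ω - f' θ‖ ^ 2 ∂μ = ∫ ω, ‖g ω‖ ^ 2 ∂μ - ‖f' θ‖ ^ 2 := by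
    have : (fun ω => ‖g ω - f' θ‖ ^ 2)
        = fun ω => ‖g ω‖ ^ 2 - 2 * inner ℝ (f' θ) (g ω) + ‖f' θ‖ ^ 2 := by
      funext ω
      rw [norm_sub_sq_real, real_inner_comm]
    have hs : Integrable (fun ω => ‖g ω‖ ^ 2 - 2 * inner ℝ (f' θ) (g ω)) μ :=
      hg2.sub (hin.const_mul 2)
    rw [this, integral_add hs (integrable_const _),
      integral_sub hg2 (hin.const_mul 2), integral_const_mul, hini]
    simp
    ring
  have hle : ∫ ω, f (θ - η • g ω) ∂μ ≤
      ∫ ω, (f θ - η * inner ℝ (f' θ) (g ω) + L * η ^ 2 / 2 * ‖g ω‖ ^ 2) ∂μ := by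
    refine integral_mono hF
      (((integrable_const _).sub (hin.const_mul η)).add (hg2.const_mul _)) ?_
    intro ω
    have := sgd_aux_descent f f' L hdiff hlip θ (-(η • g ω))
    rw [← sub_eq_add_neg, inner_neg_right, inner_smul_right, norm_neg, norm_smul, mul_pow,
      Real.norm_eq_abs, sq_abs] at this
    simp only
    linarith
  have hs : Integrable (fun ω => f θ - η * inner ℝ (f' θ) (g ω)) μ :=
    (integrable_const _).sub (hin.const_mul η)
  rw [integral_add hs (hg2.const_mul _),
    integral_sub (integrable_const _) (hin.const_mul η), integral_const_mul,
    integral_const_mul, hini] at hle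
  simp at hle
  rw [hv] at hvar
  nlinarith [mul_le_mul_of_nonneg_left hvar (by positivity : 0 ≤ L * η ^ 2 / 2)]

/-- The paper's Lemma 1 (Bounded Multi-Step Training Loss): after `R` local SGD epochs
with learning rate `η`, using an unbiased stochastic-gradient oracle with variance
bounded by `σ²`, the expected loss satisfies
`E[f(Θ_R)] ≤ f θ₀ - (η - Lη²/2) ∑_{r<R} E[‖∇f(Θ_r)‖²] + R L η² σ² / 2`. -/
theorem sgd_multi_step_expected_descent
    {E : Type*} [NormedAddCommGroup E] [InnerProductSpace ℝ E] [CompleteSpace E]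
    [MeasurableSpace E] [BorelSpace E]
    {Ω : Type*} [MeasurableSpace Ω] (μ : Measure Ω) [IsProbabilityMeasure μ]
    (f : E → ℝ) (f' : E → E) (L : ℝ) (hL : 0 ≤ L)
    (hdiff : ∀ x : E, HasGradientAt f (f' x) x)
    (hlip : ∀ x y : E, ‖f' x - f' y‖ ≤ L * ‖x - y‖)
    (η σ : ℝ) (hη : 0 ≤ η) (hσ : 0 ≤ σ)
    (R : ℕ) (hR : 1 ≤ R)
    (G : E × Ω → E) (hGmeas : Measurable G)
    (hGmean : ∀ θ : E, Integrable (fun ω => G (θ, ω)) μ ∧ ∫ ω, G (θ, ω) ∂μ = f' θ)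
    (hGvar : ∀ θ : E, ∫ ω, ‖G (θ, ω) - f' θ‖ ^ 2 ∂μ ≤ σ ^ 2)
    (θ₀ : E) (Θ : ℕ → (Fin R → Ω) → E)
    (hΘ0 : ∀ ω, Θ 0 ω = θ₀)
    (hΘstep : ∀ (r : Fin R) (ω : Fin R → Ω),
      Θ (r + 1) ω = Θ r ω - η • G (Θ r ω, ω r))
    (hfint : ∀ r : ℕ, r ≤ R →
      Integrable (fun ω => f (Θ r ω)) (Measure.pi fun _ : Fin R => μ))
    (hgradint : ∀ r : Fin R,
      Integrable (fun ω => ‖f' (Θ r ω)‖ ^ 2) (Measure.pi fun _ : Fin R => μ))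
    (hGint : ∀ r : Fin R,
      Integrable (fun ω => ‖G (Θ r ω, ω r)‖ ^ 2) (Measure.pi fun _ : Fin R => μ)) :
    ∫ ω, f (Θ R ω) ∂(Measure.pi fun _ : Fin R => μ) ≤
      f θ₀ -
        (η - L * η ^ 2 / 2) *
          ∑ r ∈ Finset.range R,
            ∫ ω, ‖f' (Θ r ω)‖ ^ 2 ∂(Measure.pi fun _ : Fin R => μ) +
        R * L * η ^ 2 * σ ^ 2 / 2 := by
  have hupd : ∀ (r : Fin R) (k : ℕ), k ≤ r → ∀ ω x,
      Θ k (Function.update ω r x) = Θ k ω := by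
    intro r k
    induction k with
    | zero => intro _ ω x; rw [hΘ0, hΘ0]
    | succ k ih =>
      intro hk ω x
      have hkR : k < R := by omega
      have hne : (⟨k, hkR⟩ : Fin R) ≠ r := by
        intro h
        have := congrArg Fin.val h
        simp at this
        omega
      have h1 := hΘstep ⟨k, hkR⟩
      simp only at h1
      rw [h1, h1, ih (by omega), Function.update_of_ne hne]
  have hstep : ∀ r : Fin R,
      ∫ ω, f (Θ (r + 1) ω) ∂(Measure.pi fun _ : Fin R => μ) ≤
        ∫ ω, f (Θ r ω) ∂(Measure.pi fun _ : Fin R => μ)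
        - (η - L * η ^ 2 / 2) * ∫ ω, ‖f' (Θ r ω)‖ ^ 2 ∂(Measure.pi fun _ : Fin R => μ)
        + L * η ^ 2 * σ ^ 2 / 2 := by
    intro r
    have hmp := sgd_aux_update μ r
    have hFi := hfint (r + 1) r.2
    have hF : Integrable (fun p : (Fin R → Ω) × Ω => f (Θ r p.1 - η • G (Θ r p.1, p.2)))
        ((Measure.pi fun _ : Fin R => μ).prod μ) := by
      have := hmp.integrable_comp_of_integrable hFi
      refine this.congr (Filter.Eventually.of_forall fun p => ?_)
      simp [hΘstep, hupd r r le_rfl]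
    have hG2 : Integrable (fun p : (Fin R → Ω) × Ω => ‖G (Θ r p.1, p.2)‖ ^ 2)
        ((Measure.pi fun _ : Fin R => μ).prod μ) := by
      have := hmp.integrable_comp_of_integrable (hGint r)
      refine this.congr (Filter.Eventually.of_forall fun p => ?_)
      simp [hupd r r le_rfl]
    have heq : ∫ ω, f (Θ (r + 1) ω) ∂(Measure.pi fun _ : Fin R => μ)
        = ∫ ω, ∫ x, f (Θ r ω - η • G (Θ r ω, x)) ∂μ ∂(Measure.pi fun _ : Fin R => μ) := by
      rw [← integral_prod _ hF]
      have h1 := hFi.aestronglyMeasurable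
      rw [← hmp.map_eq] at h1
      have h2 := integral_map hmp.measurable.aemeasurable h1
      rw [hmp.map_eq] at h2
      rw [h2]
      refine integral_congr_ae (Filter.Eventually.of_forall fun p => ?_)
      simp [hΘstep, hupd r r le_rfl]
    have hI1 := hfint r r.2.le
    have hI2 := (hgradint r).const_mul (η - L * η ^ 2 / 2)
    have hI3 : Integrable (fun _ : Fin R → Ω => L * η ^ 2 * σ ^ 2 / 2)
      (Measure.pi fun _ : Fin R => μ) := integrable_const _
    have hle := integral_mono_ae hF.integral_prod_left ((hI1.sub hI2).add hI3) (by
      filter_upwards [hF.prod_right_ae, hG2.prod_right_ae] with ω h1 h2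
      exact sgd_aux_point μ f f' L hL hdiff hlip η σ (Θ r ω) (fun x => G (Θ r ω, x))
        (hGmean _).1 (hGmean _).2 (hGvar _) h2 h1)
    rw [heq]
    refine hle.trans (le_of_eq ?_)
    rw [integral_add' (hI1.sub hI2) hI3, integral_sub' hI1 hI2, integral_const_mul]
    simp
  have hmain : ∀ k : ℕ, k ≤ R →
      ∫ ω, f (Θ k ω) ∂(Measure.pi fun _ : Fin R => μ) ≤
      f θ₀ -
        (η - L * η ^ 2 / 2) *
          ∑ r ∈ Finset.range k,
            ∫ ω, ‖f' (Θ r ω)‖ ^ 2 ∂(Measure.pi fun _ : Fin R => μ) +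
        k * L * η ^ 2 * σ ^ 2 / 2 := by
    intro k
    induction k with
    | zero => intro _; simp [hΘ0]
    | succ k ih =>
      intro hk
      have h1 := ih (by omega)
      have h2 := hstep ⟨k, hk⟩
      simp only at h2
      rw [Finset.sum_range_succ]
      push_cast
      linarith
  exact hmain R le_rfl
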